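/- For every g ∈ C(X) with g ≥ 1 and V := log(g / 𝔓₁ g) ∈ C(X), one has ‖g‖∞^{-1} ≤ (𝔓_k^V 𝟙)(x) ≤ ‖g‖∞ for all k ≥ 1 and all x ∈ X; consequently (1/k)·log (𝔓_k^V 𝟙)(x) → 0 as k → ∞, uniformly in x ∈ X. -/

import Mathlib

/-!
The function `h = 𝔓₁ g` is a fixed point of the Feynman–Kac operator: since `e^V = g / h`,
`𝔓₁^V h = ∫ (g / h) h dP = 𝔓₁ g = h`. Because `1 ≤ g ≤ ‖g‖` and `P` is Markov, also
`1 ≤ h ≤ ‖g‖`, i.e. `‖g‖⁻¹ h ≤ 𝟙 ≤ h`. The operator is positive and linear, so applying it `k`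
times gives `‖g‖⁻¹ h ≤ 𝔓_k^V 𝟙 ≤ h` (`FK_iterate_bounds`), whence the two bounds. Taking
logarithms, `|k⁻¹ log 𝔓_k^V 𝟙| ≤ k⁻¹ log ‖g‖`, uniformly in the point.
-/

open MeasureTheory Filter Topology

/-- The Feynman–Kac operator `𝔓₁^V` associated with a transition kernel `P` and a
potential `V`: `(𝔓₁^V f)(x) = ∫ e^{V(y)} f(y) P(x,dy)`.  The semigroup `𝔓_k^V` is its
`k`-th iterate. -/
noncomputable def FK {X : Type*} [MeasurableSpace X] (P : X → Measure X)
    (V : X → ℝ) (f : X → ℝ) : X → ℝ :=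
  fun x => ∫ y, Real.exp (V y) * f y ∂(P x)

/-- With `g > 0` and `h = 𝔓₁ g ≥ 1`, the order interval `[c h, h]` of continuous functions is stable
under `𝔓₁^V` for `V = log (g / h)`, hence contains all iterates of `𝟙` as soon as it contains `𝟙`. Continuity is part of
the conclusion because it makes all the integrands integrable. -/
theorem FK_iterate_bounds
    {X : Type*} [MetricSpace X] [CompactSpace X] [MeasurableSpace X] [BorelSpace X]
    (P : X → Measure X) (hP : ∀ x, IsProbabilityMeasure (P x))
    (hFeller : ∀ f : C(X, ℝ), Continuous fun x => ∫ y, f y ∂(P x))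
    (g : C(X, ℝ)) (hg : ∀ x, 0 < g x)
    (c : ℝ) (hc : ∀ x, c * ∫ y, g y ∂(P x) ≤ 1) (hone : ∀ x, 1 ≤ ∫ y, g y ∂(P x)) (k : ℕ) :
    Continuous ((FK P (fun z => Real.log (g z / ∫ y, g y ∂(P z))))^[k] (fun _ => 1)) ∧
    ∀ x, c * ∫ y, g y ∂(P x) ≤
        (FK P (fun z => Real.log (g z / ∫ y, g y ∂(P z))))^[k] (fun _ => 1) x ∧
      (FK P (fun z => Real.log (g z / ∫ y, g y ∂(P z))))^[k] (fun _ => 1) x ≤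
        ∫ y, g y ∂(P x) := by
  have hcont := hFeller g
  set h : X → ℝ := fun x => ∫ y, g y ∂(P x) with hh
  change ∀ x, c * h x ≤ 1 at hc
  change ∀ x, 1 ≤ h x at hone
  have hpos : ∀ x, 0 < h x := fun x => one_pos.trans_le (hone x)
  change Continuous ((FK P (fun z => Real.log (g z / h z)))^[k] (fun _ => 1)) ∧
    ∀ x, c * h x ≤ (FK P (fun z => Real.log (g z / h z)))^[k] (fun _ => 1) x ∧
      (FK P (fun z => Real.log (g z / h z)))^[k] (fun _ => 1) x ≤ h x
  induction k with
  | zero => exact ⟨continuous_const, fun x => ⟨hc x, hone x⟩⟩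
  | succ k ih =>
    rw [Function.iterate_succ_apply']
    set u := (FK P (fun z => Real.log (g z / h z)))^[k] (fun _ => 1)
    obtain ⟨hu, hb⟩ := ih
    have hFK : FK P (fun z => Real.log (g z / h z)) u = fun x => ∫ y, g y / h y * u y ∂(P x) := by
      funext x
      simp only [FK, Real.exp_log (div_pos (hg _) (hpos _))]
    have hw : Continuous fun y => g y / h y * u y :=
      (g.continuous.div hcont fun y => (hpos y).ne').mul hu
    have hint : ∀ {f : X → ℝ}, Continuous f → ∀ x, Integrable f (P x) := fun hf x =>
      hf.integrable_of_hasCompactSupport (HasCompactSupport.of_compactSpace _)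
    rw [hFK]
    refine ⟨hFeller ⟨_, hw⟩, fun x => ⟨?_, ?_⟩⟩
    · rw [hh]
      simp only
      rw [← integral_const_mul]
      refine integral_mono (hint (continuous_const.mul g.continuous) x) (hint hw x) fun y => ?_
      have hle := mul_le_mul_of_nonneg_left (hb y).1 (div_pos (hg y) (hpos y)).le
      have heq : g y / h y * (c * h y) = c * g y := by
        field_simp [(hpos y).ne']
      simpa only [heq] using hle
    · refine integral_mono (hint hw x) (hint g.continuous x) fun y => ?_
      have hle := mul_le_mul_of_nonneg_left (hb y).2 (div_pos (hg y) (hpos y)).le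
      simpa only [div_mul_cancel₀ _ (hpos y).ne'] using hle

/-- For `g ∈ C(X)` with `g ≥ 1` and `V = log (g / 𝔓₁ g)`, one has
`‖g‖∞⁻¹ ≤ (𝔓_k^V 𝟙)(x) ≤ ‖g‖∞` for all `k ≥ 1` and all `x`; consequently
`(1/k) log (𝔓_k^V 𝟙)(x) → 0` uniformly in `x`. -/
theorem stmt1
    {X : Type*} [MetricSpace X] [CompactSpace X] [Nonempty X]
    [MeasurableSpace X] [BorelSpace X]
    (P : X → Measure X) (hP : ∀ x, IsProbabilityMeasure (P x))
    (hFeller : ∀ f : C(X, ℝ), Continuous fun x => ∫ y, f y ∂(P x))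
    (g : C(X, ℝ)) (hg : ∀ x, 1 ≤ g x) :
    (∀ k : ℕ, 1 ≤ k → ∀ x : X,
      ‖g‖⁻¹ ≤ (FK P (fun z => Real.log (g z / ∫ y, g y ∂(P z))))^[k] (fun _ => 1) x ∧
      (FK P (fun z => Real.log (g z / ∫ y, g y ∂(P z))))^[k] (fun _ => 1) x ≤ ‖g‖) ∧
    TendstoUniformly
      (fun (k : ℕ) (x : X) => (k : ℝ)⁻¹ *
        Real.log ((FK P (fun z => Real.log (g z / ∫ y, g y ∂(P z))))^[k] (fun _ => 1) x))
      (fun _ => 0) atTop := by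
  have hgi : ∀ x, Integrable g (P x) := fun x =>
    g.continuous.integrable_of_hasCompactSupport (HasCompactSupport.of_compactSpace _)
  have hgn : ∀ x, g x ≤ ‖g‖ := fun x => (le_abs_self _).trans (g.norm_coe_le_norm x)
  have hn : 1 ≤ ‖g‖ := (hg (Classical.arbitrary X)).trans (hgn _)
  have hn0 : 0 < ‖g‖ := one_pos.trans_le hn
  have h1 : ∀ x, 1 ≤ ∫ y, g y ∂(P x) := fun x => by
    simpa using integral_mono (integrable_const (1 : ℝ)) (hgi x) hg
  have h2 : ∀ x, ∫ y, g y ∂(P x) ≤ ‖g‖ := fun x => by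
    simpa using integral_mono (hgi x) (integrable_const ‖g‖) hgn
  have hbd : ∀ k : ℕ, ∀ x : X,
      ‖g‖⁻¹ ≤ (FK P (fun z => Real.log (g z / ∫ y, g y ∂(P z))))^[k] (fun _ => 1) x ∧
      (FK P (fun z => Real.log (g z / ∫ y, g y ∂(P z))))^[k] (fun _ => 1) x ≤ ‖g‖ := by
    intro k x
    obtain ⟨hl, hu⟩ := (FK_iterate_bounds P hP hFeller g (fun x => one_pos.trans_le (hg x)) ‖g‖⁻¹
      (fun x => (inv_mul_le_one₀ hn0).2 (h2 x)) h1 k).2 x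
    exact ⟨(le_mul_of_one_le_right (inv_pos.2 hn0).le (h1 x)).trans hl, hu.trans (h2 x)⟩
  refine ⟨fun k _ => hbd k, ?_⟩
  have hlim : Tendsto (fun k : ℕ => (k : ℝ)⁻¹ * Real.log ‖g‖) atTop (𝓝 0) := by
    simpa using (tendsto_inv_atTop_nhds_zero_nat (𝕜 := ℝ)).mul_const (Real.log ‖g‖)
  rw [Metric.tendstoUniformly_iff]
  intro ε hε
  filter_upwards [hlim.eventually_lt_const hε] with k hk x
  obtain ⟨hl, hu⟩ := hbd k x
  rw [dist_zero_left, norm_mul, Real.norm_of_nonneg (by positivity : (0 : ℝ) ≤ (k : ℝ)⁻¹)]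
  refine (mul_le_mul_of_nonneg_left (abs_le.2 ⟨?_, ?_⟩) (by positivity)).trans_lt hk
  · rw [← Real.log_inv]
    exact Real.log_le_log (inv_pos.2 hn0) hl
  · exact Real.log_le_log ((inv_pos.2 hn0).trans_le hl) hu
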